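/- Let k, ℓ and m be positive integers with m ≥ 2. Then every connected {K*_k, S*_ℓ, P_m}-free graph G satisfies γ(G) ≤ 1 + Σ_{i=2}^{m−2} f_{k,ℓ}(i). -/

import Mathlib

/-!
Fix a vertex `a` and split the graph into the layers at distance `i` from `a`. A shortest path is
induced, so `P_m`-freeness kills every layer with `i ≥ m - 1`; the vertex `a` dominates the layers
`0` and `1`, and it remains to dominate each layer `i ≥ 2` by `f(i)` vertices.

*Independent sets* (`exists_dominating_of_indep`). An independent set `X` in layer `i` is dominated
by at most `g(i)` vertices of layer `i - 1`. Indeed, let `U` be a minimal set of vertices of layer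
`i - 1` dominating `X`, so that each `u ∈ U` has a private neighbor in `X`. A `k`-clique in `U`
together with its private neighbors is an induced `K*_k`, so if `U` had more than `g(i)` elements
it would contain an independent set of size `(ℓ - 1) g(i - 1) + 1`. By induction that set is
dominated by `g(i - 1)` vertices of layer `i - 2`, one of which is thus adjacent to `ℓ` of its
elements; with the private neighbors this is an induced `S*_ℓ`.

*Whole layers* (`exists_dominating_layer`). Let `X` be a maximal independent set in layer `i`, and
let `U` dominate `X` as above. For `u ∈ U`, consider the vertices of the layer that are not
dominated by `U` but have a neighbor in `X ∩ N(u)`, and a minimal subset `X_u` of `X ∩ N(u)`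
dominating them. The private neighbors of `X_u` contain neither a `k`-clique (with `X_u` as pendant
vertices it would give `K*_k`) nor an independent set of size `ℓ` (with `X_u` and the center `u` it
would give `S*_ℓ`). Hence `|X_u| < R(k, ℓ)`, and the sets `{u} ∪ X_u` dominate the layer.
-/

open SimpleGraph Finset

/-- A set `U` dominates a set `Y` in the graph `G`:
every vertex of `Y` is in the closed neighborhood of some vertex of `U`. -/
def Dominates {V : Type} (G : SimpleGraph V) (U Y : Set V) : Prop :=
  ∀ y ∈ Y, ∃ u ∈ U, u = y ∨ G.Adj u y

/-- The domination number of a finite graph. -/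
noncomputable def domNum {V : Type} [Fintype V] (G : SimpleGraph V) : ℕ :=
  sInf {n | ∃ S : Set V, S.ncard = n ∧ Dominates G S Set.univ}

/-- The graph `K*_n`: a complete graph on `x₁,…,xₙ` (the `inl` vertices)
together with a pendant vertex `yᵢ` (the `inr` vertices) attached to each `xᵢ`. -/
def Kstar (n : ℕ) : SimpleGraph (Fin n ⊕ Fin n) :=
  SimpleGraph.fromRel (fun a b => match a, b with
    | Sum.inl _, Sum.inl _ => True
    | Sum.inl i, Sum.inr j => i = j
    | _, _ => False)

/-- The graph `S*_n`: a star with center `x` (= `none`), leaves `yᵢ` (= `some (inl i)`),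
with every edge subdivided by `zᵢ` (= `some (inr i)`): edges `x yᵢ` and `yᵢ zᵢ`. -/
def Sstar (n : ℕ) : SimpleGraph (Option (Fin n ⊕ Fin n)) :=
  SimpleGraph.fromRel (fun a b => match a, b with
    | none, some (Sum.inl _) => True
    | some (Sum.inl i), some (Sum.inr j) => i = j
    | _, _ => False)

/-- `N^i_G(a)`: the set of vertices at distance exactly `i` from `a` in `G`. -/
def sphere {V : Type} (G : SimpleGraph V) (a : V) (i : ℕ) : Set V :=
  {v | G.Reachable a v ∧ G.dist a v = i}

/-- An independent set of vertices. -/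
def Indep {V : Type} (G : SimpleGraph V) (X : Set V) : Prop :=
  ∀ x ∈ X, ∀ y ∈ X, x ≠ y → ¬ G.Adj x y

/-- `N` vertices suffice to force a clique of size `s` or an independent set of size `t`. -/
def RamseyProp (N s t : ℕ) : Prop :=
  ∀ G : SimpleGraph (Fin N),
    (∃ A : Finset (Fin N), G.IsNClique s A) ∨ (∃ B : Finset (Fin N), Gᶜ.IsNClique t B)

/-- The Ramsey number `R(s,t)`. -/
noncomputable def ramsey (s t : ℕ) : ℕ := sInf {N | RamseyProp N s t}

/-- The function `g_{k,ℓ}` with `g(1) = 1` and `g(i) = R(k, (ℓ-1)g(i-1)+1) - 1` for `i ≥ 2`. -/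
noncomputable def gfun (k l : ℕ) : ℕ → ℕ
  | 0 => 1
  | 1 => 1
  | (i + 2) => ramsey k ((l - 1) * gfun k l (i + 1) + 1) - 1

/-- The function `f_{k,ℓ}(i) = R(k,ℓ) ⬝ g_{k,ℓ}(i)`. -/
noncomputable def ffun (k l i : ℕ) : ℕ := ramsey k l * gfun k l i

/-- A finite graph, encoded with vertex set `Fin n`. -/
abbrev FinGraph := Σ n : ℕ, SimpleGraph (Fin n)

/-- `G` is `𝓗`-free: no member of `𝓗` is an induced subgraph of `G`. -/
def HFree (𝓗 : Set FinGraph) {V : Type} (G : SimpleGraph V) : Prop :=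
  ∀ H ∈ 𝓗, IsEmpty (H.2 ↪g G)

/-! ### Ramsey's theorem -/

/-- Ramsey's theorem for two colors, relative to a finite set of vertices. -/
lemma exists_ramsey_bound (s t : ℕ) : ∃ N, ∀ (V : Type) (G : SimpleGraph V) (S : Finset V),
    N ≤ S.card → (∃ A ⊆ S, G.IsNClique s A) ∨ (∃ B ⊆ S, Gᶜ.IsNClique t B) := by
  classical
  induction s generalizing t with
  | zero => exact ⟨0, fun V G S _ => Or.inl ⟨∅, by simp, by simp [isNClique_iff]⟩⟩
  | succ s ihs =>
    induction t with
    | zero => exact ⟨0, fun V G S _ => Or.inr ⟨∅, by simp, by simp [isNClique_iff]⟩⟩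
    | succ t iht =>
      obtain ⟨N₁, h₁⟩ := ihs (t + 1)
      obtain ⟨N₂, h₂⟩ := iht
      refine ⟨N₁ + N₂ + 1, fun V G S hS => ?_⟩
      obtain ⟨v, hv⟩ : S.Nonempty := Finset.card_pos.1 (by omega)
      have hcard := Finset.card_filter_add_card_filter_not (s := S.erase v) (G.Adj v)
      rw [Finset.card_erase_of_mem hv] at hcard
      have hsub : ∀ (q : V → Prop) [DecidablePred q], (S.erase v).filter q ⊆ S :=
        fun q _ => (Finset.filter_subset _ _).trans (Finset.erase_subset _ _)
      rcases le_or_gt N₁ ((S.erase v).filter (G.Adj v)).card with h | h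
      · rcases h₁ V G _ h with ⟨A, hA, hA'⟩ | ⟨B, hB, hB'⟩
        · refine Or.inl ⟨insert v A, Finset.insert_subset hv (hA.trans (hsub _)),
            hA'.insert fun b hb => ?_⟩
          exact (Finset.mem_filter.1 (hA hb)).2
        · exact Or.inr ⟨B, hB.trans (hsub _), hB'⟩
      · rcases h₂ V G ((S.erase v).filter (fun w => ¬ G.Adj v w)) (by omega) with
          ⟨A, hA, hA'⟩ | ⟨B, hB, hB'⟩
        · exact Or.inl ⟨A, hA.trans (hsub _), hA'⟩
        · refine Or.inr ⟨insert v B, Finset.insert_subset hv (hB.trans (hsub _)),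
            hB'.insert fun b hb => ?_⟩
          have := Finset.mem_filter.1 (hB hb)
          exact ⟨(Finset.ne_of_mem_erase this.1).symm, this.2⟩

/-- The infimum defining `ramsey s t` is attained, so it is not a junk value. -/
lemma ramseyProp_ramsey (s t : ℕ) : RamseyProp (ramsey s t) s t := by
  obtain ⟨N, hN⟩ := exists_ramsey_bound s t
  refine Nat.sInf_mem (s := {N | RamseyProp N s t}) ⟨N, fun G => ?_⟩
  rcases hN (Fin N) G Finset.univ (by simp) with ⟨A, -, hA⟩ | ⟨B, -, hB⟩
  · exact Or.inl ⟨A, hA⟩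
  · exact Or.inr ⟨B, hB⟩

/-! ### Induced copies of the forbidden graphs -/

/-- An induced `K*_n` from a clique `x`, an independent family `y` and a perfect induced matching
between them. -/
lemma nonempty_Kstar_embedding {V : Type} {G : SimpleGraph V} {n : ℕ} (x y : Fin n → V)
    (hx : ∀ i j, i ≠ j → G.Adj (x i) (x j)) (hy : ∀ i j, ¬ G.Adj (y i) (y j))
    (hxy : ∀ i j, G.Adj (x i) (y j) ↔ i = j) : Nonempty (Kstar n ↪g G) := by
  have hne : ∀ i j, x i ≠ y j := by
    intro i j h
    by_cases hij : i = j
    · subst hij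
      exact G.loopless.irrefl (x i) (h ▸ (hxy i i).2 rfl)
    · exact hy j i (h ▸ (hxy i i).2 rfl)
  refine ⟨⟨⟨Sum.elim x y, ?_⟩, ?_⟩⟩
  · rintro (i | i) (j | j) h
    · by_contra hij
      have := hx i j (fun h' => hij (by rw [h']))
      simp only [Sum.elim_inl] at h
      exact G.loopless.irrefl (x j) (h ▸ this)
    · exact (hne i j h).elim
    · exact (hne j i h.symm).elim
    · have h' : y i = y j := h
      rw [(hxy i j).1 (h' ▸ (hxy i i).2 rfl)]
  · intro u v
    change G.Adj (Sum.elim x y u) (Sum.elim x y v) ↔ _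
    rcases u with i | i <;> rcases v with j | j
    · by_cases hij : i = j
      · simp [Kstar, hij]
      · simp [Kstar, hij, hx i j hij]
    · simp [Kstar, hxy]
    · simp [Kstar, G.adj_comm (y i), hxy]
    · simp [Kstar, hy]

/-- An induced `S*_n` from a center `c`, its independent neighbors `y`, and an independent family
`z` of non-neighbors of `c` joined to `y` by a perfect induced matching. -/
lemma nonempty_Sstar_embedding {V : Type} {G : SimpleGraph V} {n : ℕ} (c : V) (y z : Fin n → V)
    (hc : ∀ i, G.Adj c (y i)) (hcz : ∀ i, ¬ G.Adj c (z i)) (hcz' : ∀ i, c ≠ z i)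
    (hy : ∀ i j, ¬ G.Adj (y i) (y j)) (hz : ∀ i j, ¬ G.Adj (z i) (z j))
    (hyz : ∀ i j, G.Adj (y i) (z j) ↔ i = j) : Nonempty (Sstar n ↪g G) := by
  have hne : ∀ i j, y i ≠ z j := fun i j h => hcz j (h ▸ hc i)
  refine ⟨⟨⟨fun o => o.elim c (Sum.elim y z), ?_⟩, ?_⟩⟩
  · rintro (_ | i | i) (_ | j | j) h
    · rfl
    · exact ((hc j).ne h).elim
    · exact (hcz' j h).elim
    · exact ((hc i).ne h.symm).elim
    · have h' : y i = y j := h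
      rw [(hyz i j).1 (h' ▸ (hyz j j).2 rfl)]
    · exact (hne i j h).elim
    · exact (hcz' i h.symm).elim
    · exact (hne j i h.symm).elim
    · have h' : z i = z j := h
      rw [(hyz i j).1 (h' ▸ (hyz i i).2 rfl)]
  · intro u v
    change G.Adj (u.elim c (Sum.elim y z)) (v.elim c (Sum.elim y z)) ↔ _
    rcases u with _ | i | i <;> rcases v with _ | j | j
    · simp [Sstar]
    · simp [Sstar, hc]
    · simp [Sstar, hcz]
    · simp [Sstar, (hc i).symm]
    · simp [Sstar, hy]
    · simp [Sstar, hyz]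
    · simp [Sstar, G.adj_comm (z i), hcz]
    · simp [Sstar, G.adj_comm (z i), hyz]
    · simp [Sstar, hz]

/-- In a `K*_k`-free graph, if `x` and `y` are the two sides of an induced matching indexed by `I`
with `y` independent, then `x` has an independent subfamily of any size `t` with
`R(k, t) ≤ |I|`. -/
lemma exists_indep_subfamily {V : Type} {G : SimpleGraph V} {k : ℕ}
    (hK : IsEmpty (Kstar k ↪g G)) (t : ℕ) (I : Finset V) (x y : V → V)
    (hy : ∀ i ∈ I, ∀ j ∈ I, ¬ G.Adj (y i) (y j))
    (hxy : ∀ i ∈ I, ∀ j ∈ I, (G.Adj (x i) (y j) ↔ i = j)) (hI : ramsey k t ≤ I.card) :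
    ∃ J ⊆ I, J.card = t ∧ ∀ i ∈ J, ∀ j ∈ J, ¬ G.Adj (x i) (x j) := by
  classical
  let e : Fin (ramsey k t) ↪ V :=
    (Fin.castLEEmb hI).trans (I.equivFin.symm.toEmbedding.trans (Function.Embedding.subtype _))
  have he : ∀ i, e i ∈ I := fun i => (I.equivFin.symm (Fin.castLE hI i)).2
  rcases ramseyProp_ramsey k t (G.comap (fun i => x (e i))) with ⟨A, hA⟩ | ⟨B, hB⟩
  · exfalso
    let r := A.orderEmbOfFin hA.card_eq
    have hr : ∀ i, r i ∈ A := fun i => A.orderEmbOfFin_mem hA.card_eq i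
    obtain ⟨φ⟩ := nonempty_Kstar_embedding (G := G) (fun i => x (e (r i))) (fun i => y (e (r i)))
      (fun i j hij => hA.isClique (hr i) (hr j) (fun h => hij (r.injective h)))
      (fun i j => hy _ (he _) _ (he _))
      (fun i j => (hxy _ (he _) _ (he _)).trans
        ⟨fun h => r.injective (e.injective h), fun h => by rw [h]⟩)
    exact hK.false φ
  · refine ⟨B.map e, ?_, by simp [hB.card_eq], ?_⟩
    · intro v hv
      obtain ⟨i, -, rfl⟩ := Finset.mem_map.1 hv
      exact he i
    · intro v hv w hw h
      obtain ⟨i, hi, rfl⟩ := Finset.mem_map.1 hv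
      obtain ⟨j, hj, rfl⟩ := Finset.mem_map.1 hw
      have hij : i ≠ j := by
        rintro rfl
        exact G.loopless.irrefl _ h
      exact (hB.isClique hi hj hij).2 h

/-- An `S*_l`-free graph has no induced spider with at least `l` legs `c - y i - z i`, `i ∈ I`. -/
lemma not_spider {V : Type} {G : SimpleGraph V} {l : ℕ}
    (hS : IsEmpty (Sstar l ↪g G)) (I : Finset V) (hI : l ≤ I.card) (c : V) (y z : V → V)
    (hc : ∀ i ∈ I, G.Adj c (y i)) (hcz : ∀ i ∈ I, ¬ G.Adj c (z i)) (hcz' : ∀ i ∈ I, c ≠ z i)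
    (hy : ∀ i ∈ I, ∀ j ∈ I, ¬ G.Adj (y i) (y j)) (hz : ∀ i ∈ I, ∀ j ∈ I, ¬ G.Adj (z i) (z j))
    (hyz : ∀ i ∈ I, ∀ j ∈ I, (G.Adj (y i) (z j) ↔ i = j)) : False := by
  classical
  let e : Fin l ↪ V :=
    (Fin.castLEEmb hI).trans (I.equivFin.symm.toEmbedding.trans (Function.Embedding.subtype _))
  have he : ∀ i, e i ∈ I := fun i => (I.equivFin.symm (Fin.castLE hI i)).2
  obtain ⟨φ⟩ := nonempty_Sstar_embedding (G := G) c (fun i => y (e i)) (fun i => z (e i))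
    (fun i => hc _ (he i)) (fun i => hcz _ (he i)) (fun i => hcz' _ (he i))
    (fun i j => hy _ (he i) _ (he j)) (fun i j => hz _ (he i) _ (he j))
    (fun i j => (hyz _ (he i) _ (he j)).trans ⟨fun h => e.injective h, fun h => by rw [h]⟩)
  exact hS.false φ

/-! ### Private neighbors and distance layers -/

/-- A minimal subset of `U` dominating `Y` by adjacency; `p u` is a private neighbor of `u`. -/
lemma exists_minimal_dominating {V : Type} (G : SimpleGraph V) (U Y : Finset V)
    (hU : ∀ y ∈ Y, ∃ u ∈ U, G.Adj u y) :
    ∃ U' ⊆ U, (∀ y ∈ Y, ∃ u ∈ U', G.Adj u y) ∧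
      ∃ p : V → V, (∀ u ∈ U', p u ∈ Y) ∧
        ∀ u ∈ U', ∀ u' ∈ U', (G.Adj u (p u') ↔ u = u') := by
  classical
  induction U using Finset.strongInduction with
  | H U ih =>
    by_cases h : ∃ u ∈ U, ∀ y ∈ Y, ∃ u' ∈ U.erase u, G.Adj u' y
    · obtain ⟨u, hu, h⟩ := h
      obtain ⟨U', hU', h'⟩ := ih _ (Finset.erase_ssubset hu) h
      exact ⟨U', hU'.trans (Finset.erase_subset _ _), h'⟩
    · push Not at h
      choose! p hp hp' using h
      refine ⟨U, Finset.Subset.refl _, hU, p, hp, fun u hu u' hu' => ⟨fun hadj => ?_, ?_⟩⟩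
      · by_contra hne
        exact hp' u' hu' u (Finset.mem_erase.2 ⟨hne, hu⟩) hadj
      · rintro rfl
        obtain ⟨w, hw, hwy⟩ := hU _ (hp u hu)
        by_cases hwu : w = u
        · exact hwu ▸ hwy
        · exact (hp' u hu w (Finset.mem_erase.2 ⟨hwu, hw⟩) hwy).elim

lemma exists_adj_dist {V : Type} {G : SimpleGraph V} (hG : G.Connected) {a v : V} {i : ℕ}
    (h : G.dist a v = i + 1) : ∃ u, G.Adj u v ∧ G.dist a u = i := by
  obtain ⟨p, hp⟩ := hG.exists_walk_length_eq_dist a v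
  have hlen : p.reverse.length = i + 1 := by simp [hp, h]
  cases hq : p.reverse with
  | nil => simp [hq] at hlen
  | @cons _ u _ hadj q =>
    rw [hq, Walk.length_cons] at hlen
    have h1 : G.dist a u ≤ i := by
      rw [G.dist_comm]
      exact (dist_le q).trans (by omega)
    have h2 := hG.dist_triangle (u := a) (v := u) (w := v)
    rw [SimpleGraph.dist_eq_one_iff_adj.2 hadj.symm] at h2
    exact ⟨u, hadj.symm, by omega⟩

lemma dist_le_of_adj {V : Type} {G : SimpleGraph V} (hG : G.Connected) (a : V) {u v : V}
    (h : G.Adj u v) : G.dist a v ≤ G.dist a u + 1 := by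
  have h2 := hG.dist_triangle (u := a) (v := u) (w := v)
  rwa [SimpleGraph.dist_eq_one_iff_adj.2 h] at h2

lemma exists_geodesic {V : Type} {G : SimpleGraph V} (hG : G.Connected) (a : V) (n : ℕ) :
    ∀ v, G.dist a v = n → ∃ f : ℕ → V, f n = v ∧ (∀ i ≤ n, G.dist a (f i) = i) ∧
      ∀ i < n, G.Adj (f i) (f (i + 1)) := by
  induction n with
  | zero =>
    intro v hv
    refine ⟨fun _ => v, rfl, fun i hi => ?_, fun i hi => by omega⟩
    rw [hv]
    omega
  | succ n ih =>
    intro v hv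
    obtain ⟨u, huv, hu⟩ := exists_adj_dist hG hv
    obtain ⟨f, hfn, hf, hf'⟩ := ih u hu
    refine ⟨fun i => if i ≤ n then f i else v, by simp, fun i hi => ?_, fun i hi => ?_⟩
    · by_cases h : i ≤ n
      · simp [h, hf]
      · simp only [h, if_false, hv]
        omega
    · by_cases h : i + 1 ≤ n
      · simpa [h, (by omega : i ≤ n)] using hf' i (by omega)
      · obtain rfl : i = n := by omega
        simpa [hfn] using huv

/-- Distances in a connected `P_m`-free graph are at most `m - 2`. -/
lemma dist_lt_of_path_free {V : Type} {G : SimpleGraph V} (hG : G.Connected) {m : ℕ}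
    (hP : IsEmpty (pathGraph m ↪g G)) (a v : V) : G.dist a v + 1 < m := by
  by_contra hlt
  obtain ⟨f, -, hf, hf'⟩ := exists_geodesic hG a _ v rfl
  have hd : ∀ i : Fin m, G.dist a (f i) = i := fun i => hf _ (by omega)
  refine hP.false ⟨⟨fun i : Fin m => f i, fun i j h => ?_⟩, fun {i j} => ?_⟩
  · have h' : f i = f j := h
    have := hd i
    rw [h', hd j] at this
    exact Fin.ext this.symm
  · change G.Adj (f i) (f j) ↔ _
    rw [pathGraph_adj]
    constructor
    · intro h
      have h1 := dist_le_of_adj hG a h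
      have h2 := dist_le_of_adj hG a h.symm
      have hne : (i : ℕ) ≠ j := fun e => h.ne (by rw [e])
      rw [hd, hd] at h1 h2
      omega
    · rintro (h | h)
      · rw [← h]
        exact hf' _ (by omega)
      · rw [← h]
        exact (hf' _ (by omega)).symm

/-! ### Dominating the layers -/

/-- An independent set in the layer `i + 1` is dominated by at most `g(i + 1)` vertices of the
layer `i`. -/
lemma exists_dominating_of_indep {V : Type} [Fintype V] {G : SimpleGraph V} (hG : G.Connected)
    {k l : ℕ} (hl : 0 < l) (hK : IsEmpty (Kstar k ↪g G)) (hS : IsEmpty (Sstar l ↪g G))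
    (a : V) (i : ℕ) : ∀ X : Finset V, (∀ x ∈ X, G.dist a x = i + 1) →
      (∀ x ∈ X, ∀ y ∈ X, ¬ G.Adj x y) →
      ∃ U : Finset V, (∀ u ∈ U, G.dist a u = i) ∧ U.card ≤ gfun k l (i + 1) ∧
        ∀ x ∈ X, ∃ u ∈ U, G.Adj u x := by
  classical
  induction i with
  | zero =>
    intro X hX _
    refine ⟨{a}, by simp, by simp [gfun], fun x hx => ⟨a, by simp, ?_⟩⟩
    exact SimpleGraph.dist_eq_one_iff_adj.1 (hX x hx)
  | succ i ih =>
    intro X hX hXi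
    obtain ⟨U, hUsub, hUdom, p, hp, hpp⟩ := exists_minimal_dominating G
      (Finset.univ.filter (fun u => G.dist a u = i + 1)) X (fun x hx => by
        obtain ⟨u, hu, hd⟩ := exists_adj_dist hG (hX x hx)
        exact ⟨u, by simp [hd], hu⟩)
    have hUd : ∀ u ∈ U, G.dist a u = i + 1 := fun u hu => (Finset.mem_filter.1 (hUsub hu)).2
    refine ⟨U, hUd, ?_, hUdom⟩
    by_contra hcard
    obtain ⟨J, hJU, hJc, hJ⟩ := exists_indep_subfamily hK ((l - 1) * gfun k l (i + 1) + 1) U id p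
      (fun u hu v hv => hXi _ (hp u hu) _ (hp v hv)) hpp (by
        simp only [gfun] at hcard
        omega)
    obtain ⟨W, hW, hWc, hWdom⟩ := ih J (fun u hu => hUd u (hJU hu)) hJ
    choose! w hwW hw using hWdom
    have hlt : W.card * (l - 1) < J.card := by
      rw [hJc, Nat.lt_succ_iff, mul_comm]
      exact Nat.mul_le_mul_left _ hWc
    obtain ⟨c, hcW, hc⟩ := Finset.exists_lt_card_fiber_of_mul_lt_card_of_maps_to hwW hlt
    have hI : ∀ u ∈ J.filter (fun u => w u = c), u ∈ J ∧ w u = c := fun u hu =>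
      Finset.mem_filter.1 hu
    have hfar : ∀ u ∈ J, G.dist a (p u) = i + 2 := fun u hu => hX _ (hp u (hJU hu))
    refine not_spider hS (J.filter (fun u => w u = c)) (by omega) c id p ?_ ?_ ?_ ?_ ?_ ?_
    · intro u hu
      exact (hI u hu).2 ▸ hw u (hI u hu).1
    · intro u hu h
      have h1 := dist_le_of_adj hG a h
      rw [hfar u (hI u hu).1, hW c hcW] at h1
      omega
    · intro u hu h
      have h1 := hfar u (hI u hu).1
      rw [← h, hW c hcW] at h1
      omega
    · exact fun u hu v hv => hJ u (hI u hu).1 v (hI v hv).1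
    · exact fun u hu v hv => hXi _ (hp u (hJU (hI u hu).1)) _ (hp v (hJU (hI v hv).1))
    · exact fun u hu v hv => hpp u (hJU (hI u hu).1) v (hJU (hI v hv).1)

lemma exists_maximal_indep {V : Type} (G : SimpleGraph V) (D : Finset V) :
    ∃ X ⊆ D, (∀ x ∈ X, ∀ y ∈ X, ¬ G.Adj x y) ∧ ∀ v ∈ D, v ∈ X ∨ ∃ x ∈ X, G.Adj x v := by
  classical
  induction D using Finset.induction_on with
  | empty => exact ⟨∅, by simp⟩
  | insert d D _ ih =>
    obtain ⟨X, hXD, hX, hdom⟩ := ih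
    by_cases hd : ∃ x ∈ X, G.Adj x d
    · refine ⟨X, hXD.trans (Finset.subset_insert _ _), hX, fun v hv => ?_⟩
      rcases Finset.mem_insert.1 hv with rfl | hv
      · exact Or.inr hd
      · exact hdom v hv
    · push Not at hd
      refine ⟨insert d X, Finset.insert_subset_insert _ hXD, fun x hx y hy h => ?_, fun v hv => ?_⟩
      · rcases Finset.mem_insert.1 hx with rfl | hx' <;>
          rcases Finset.mem_insert.1 hy with rfl | hy'
        · exact G.loopless.irrefl _ h
        · exact hd y hy' h.symm
        · exact hd x hx' h
        · exact hX x hx' y hy' h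
      · rcases Finset.mem_insert.1 hv with rfl | hv
        · exact Or.inl (Finset.mem_insert_self _ _)
        · rcases hdom v hv with h | ⟨x, hx, h⟩
          · exact Or.inl (Finset.mem_insert_of_mem h)
          · exact Or.inr ⟨x, Finset.mem_insert_of_mem hx, h⟩

/-- Each layer `i + 1` is dominated by at most `f(i + 1)` vertices. -/
lemma exists_dominating_layer {V : Type} [Fintype V] {G : SimpleGraph V} (hG : G.Connected)
    {k l : ℕ} (hl : 0 < l) (hK : IsEmpty (Kstar k ↪g G))
    (hS : IsEmpty (Sstar l ↪g G)) (a : V) (i : ℕ) :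
    ∃ S : Finset V, S.card ≤ ffun k l (i + 1) ∧
      ∀ v, G.dist a v = i + 1 → ∃ u ∈ S, u = v ∨ G.Adj u v := by
  classical
  obtain ⟨X, hXD, hX, hdom⟩ :=
    exists_maximal_indep G (Finset.univ.filter (fun v => G.dist a v = i + 1))
  obtain ⟨U, -, hUc, hUdom⟩ := exists_dominating_of_indep hG hl hK hS a i X
    (fun x hx => (Finset.mem_filter.1 (hXD hx)).2) hX
  have key : ∀ u ∈ U, ∃ Z : Finset V, Z.card + 1 ≤ ramsey k l ∧
      ∀ v, (∀ u' ∈ U, ¬ G.Adj u' v) → (∃ x ∈ X, G.Adj u x ∧ G.Adj x v) → u ≠ v →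
        ∃ z ∈ Z, G.Adj z v := by
    intro u hu
    obtain ⟨Z, hZ, hZdom, p, hp, hpp⟩ := exists_minimal_dominating G (X.filter (G.Adj u))
      (Finset.univ.filter (fun v => (∀ u' ∈ U, ¬ G.Adj u' v) ∧
        (∃ x ∈ X, G.Adj u x ∧ G.Adj x v) ∧ u ≠ v)) (fun v hv => by
        obtain ⟨-, -, ⟨x, hx, hux, hxv⟩, -⟩ := Finset.mem_filter.1 hv
        exact ⟨x, Finset.mem_filter.2 ⟨hx, hux⟩, hxv⟩)
    refine ⟨Z, ?_, fun v h1 h2 h3 => hZdom v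
      (Finset.mem_filter.2 ⟨Finset.mem_univ v, h1, h2, h3⟩)⟩
    by_contra hcard
    have hZX : ∀ z ∈ Z, z ∈ X ∧ G.Adj u z := fun z hz => Finset.mem_filter.1 (hZ hz)
    have hpT : ∀ z ∈ Z, _ := fun z hz => (Finset.mem_filter.1 (hp z hz)).2
    -- Here the private neighbors form the clique side, and `Z` supplies the pendant vertices.
    obtain ⟨J, hJZ, hJc, hJ⟩ := exists_indep_subfamily hK l Z p id
      (fun z hz z' hz' => hX _ (hZX z hz).1 _ (hZX z' hz').1)
      (fun z hz z' hz' => by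
        rw [G.adj_comm, id, hpp z' hz' z hz, eq_comm]) (by omega)
    exact not_spider hS J hJc.ge u id p
      (fun z hz => (hZX z (hJZ hz)).2)
      (fun z hz => (hpT z (hJZ hz)).1 u hu)
      (fun z hz => (hpT z (hJZ hz)).2.2)
      (fun z hz z' hz' => hX _ (hZX z (hJZ hz)).1 _ (hZX z' (hJZ hz')).1)
      hJ
      (fun z hz z' hz' => hpp z (hJZ hz) z' (hJZ hz'))
  choose! Z hZc hZ using key
  refine ⟨U.biUnion (fun u => insert u (Z u)), ?_, fun v hv => ?_⟩
  · calc (U.biUnion (fun u => insert u (Z u))).card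
        ≤ U.card * ramsey k l := Finset.card_biUnion_le_card_mul _ _ _ fun u hu =>
          (Finset.card_insert_le _ _).trans (hZc u hu)
      _ ≤ gfun k l (i + 1) * ramsey k l := Nat.mul_le_mul_right _ hUc
      _ = ffun k l (i + 1) := mul_comm _ _
  · by_cases hvU : ∃ u ∈ U, u = v ∨ G.Adj u v
    · obtain ⟨u, hu, h⟩ := hvU
      exact ⟨u, Finset.mem_biUnion.2 ⟨u, hu, Finset.mem_insert_self _ _⟩, h⟩
    · push Not at hvU
      rcases hdom v (by simp [hv]) with hvX | ⟨x, hx, hxv⟩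
      · obtain ⟨u, hu, h⟩ := hUdom v hvX
        exact ((hvU u hu).2 h).elim
      · obtain ⟨u, hu, hux⟩ := hUdom x hx
        obtain ⟨z, hz, hzv⟩ := hZ u hu v (fun u' hu' => (hvU u' hu').2) ⟨x, hx, hux, hxv⟩
          (hvU u hu).1
        exact ⟨z, Finset.mem_biUnion.2 ⟨u, hu, Finset.mem_insert_of_mem hz⟩, Or.inr hzv⟩

/-- Every connected `{K*_k, S*_ℓ, P_m}`-free graph `G` satisfies
`γ(G) ≤ 1 + ∑_{i=2}^{m-2} f_{k,ℓ}(i)`. -/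
theorem domNum_le_of_free (k l m : ℕ) (hk : 0 < k) (hl : 0 < l) (hm : 2 ≤ m)
    (V : Type) [Fintype V] (G : SimpleGraph V) (hG : G.Connected)
    (hK : IsEmpty (Kstar k ↪g G)) (hS : IsEmpty (Sstar l ↪g G))
    (hP : IsEmpty (pathGraph m ↪g G)) :
    domNum G ≤ 1 + ∑ i ∈ Finset.Icc 2 (m - 2), ffun k l i := by
  classical
  obtain ⟨a⟩ := hG.nonempty
  choose S hSc hSd using exists_dominating_layer hG hl hK hS a
  let T : Finset V := insert a ((Finset.Icc 2 (m - 2)).biUnion (fun i => S (i - 1)))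
  have hTc : T.card ≤ 1 + ∑ i ∈ Finset.Icc 2 (m - 2), ffun k l i := by
    refine (Finset.card_insert_le _ _).trans ?_
    rw [add_comm]
    refine Nat.add_le_add_left (Finset.card_biUnion_le.trans (Finset.sum_le_sum fun i hi => ?_)) _
    have h2 := (Finset.mem_Icc.1 hi).1
    have := hSc (i - 1)
    rwa [Nat.sub_add_cancel (by omega)] at this
  have hTd : Dominates G (T : Set V) Set.univ := by
    intro v _
    have hlt := dist_lt_of_path_free hG hP a v
    rcases Nat.lt_or_ge (G.dist a v) 2 with h | h
    · refine ⟨a, Finset.mem_coe.2 (Finset.mem_insert_self _ _), ?_⟩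
      rcases Nat.lt_or_ge (G.dist a v) 1 with h' | h'
      · exact Or.inl (hG.dist_eq_zero_iff.1 (by omega))
      · exact Or.inr (SimpleGraph.dist_eq_one_iff_adj.1 (by omega))
    · obtain ⟨u, hu, huv⟩ := hSd (G.dist a v - 1) v (by omega)
      refine ⟨u, Finset.mem_coe.2 (Finset.mem_insert_of_mem (Finset.mem_biUnion.2
        ⟨G.dist a v, Finset.mem_Icc.2 ⟨h, by omega⟩, hu⟩)), huv⟩
  exact le_trans (Nat.sInf_le (m := T.card) ⟨(T : Set V), Set.ncard_coe_finset T, hTd⟩) hTc
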